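/- arXiv:1410.1201 — 4 statements merged into one kernel-verified Lean document; each statement's English description precedes it below -/
import Mathlib

section
/- Let N ≥ 2 be an integer, κ ∈ (0, 1/4], and α₊ = 1 + √(1−4κ). For every boundary point y ∈ ∂H = {x ∈ ℝ^N : x_N = 0}, the function u(x) = x_N^{α₊/2} |x − y|^{−(N−2+α₊)} satisfies −Δu(x) − κ x_N^{−2} u(x) = 0 for every x ∈ H \ {y}. (This is the half-space model of the Poisson kernel K_κ(·, y) of the Hardy operator, whose two-sided estimate is K_κ(x,y) ≍ d(x)^{α₊/2}|x−y|^{−(N−2+α₊)}.) -/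
open Real MeasureTheory

/-- The Euclidean Laplacian of `u : ℝ^N → ℝ`, written as the sum of the second
partial derivatives in the coordinate directions. -/
noncomputable def lap {N : ℕ} (u : EuclideanSpace ℝ (Fin N) → ℝ)
    (x : EuclideanSpace ℝ (Fin N)) : ℝ :=
  ∑ i : Fin N,
    fderiv ℝ (fun y => fderiv ℝ u y (EuclideanSpace.single i 1)) x (EuclideanSpace.single i 1)

/-!
Write `u = f g` with `f = x_n ^ b`, `b = α / 2`, and `g = |x - y| ^ p`. The product rule
`Δ(fg) = f Δg + 2 ∇f ⬝ ∇g + g Δf`, together with `Δf = b (b - 1) x_n ^ (b - 2)`,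
`Δg = p (p + N - 2) |x - y| ^ (p - 2)` and, because `y_n = 0`,
`∇f ⬝ ∇g = b p x_n ^ b |x - y| ^ (p - 2)`, gives
`Δu = b (b - 1) x_n⁻² u + p (p + N - 2 + 2 b) |x - y|⁻² u`.
The choice `p = -(N - 2 + α)` kills the second term, and `b (b - 1) = -κ` is the quadratic
equation whose roots are the Hardy exponents.
-/

open scoped Gradient InnerProductSpace Topology

section DirectionalDerivatives

variable {𝕜 E F : Type*} [NontriviallyNormedField 𝕜] [NormedAddCommGroup E] [NormedSpace 𝕜 E]
  [NormedAddCommGroup F] [NormedSpace 𝕜 F] {f g : E → 𝕜} {φ : 𝕜 → 𝕜} {x : E}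

theorem eventually_differentiableAt_of_contDiffAt_two {h : E → F} (hh : ContDiffAt 𝕜 2 h x) :
    ∀ᶠ z in 𝓝 x, DifferentiableAt 𝕜 h z :=
  (hh.eventually (by simp)).mono fun _ hz => hz.differentiableAt two_ne_zero

theorem differentiableAt_fderiv_apply {h : E → F} (hh : ContDiffAt 𝕜 2 h x) (v : E) :
    DifferentiableAt 𝕜 (fun z => fderiv 𝕜 h z v) x :=
  ((hh.fderiv_right (m := 1) (by norm_num)).differentiableAt one_ne_zero).clm_apply
    (differentiableAt_const v)

theorem fderiv_fderiv_mul_apply (hf : ContDiffAt 𝕜 2 f x) (hg : ContDiffAt 𝕜 2 g x) (v w : E) :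
    fderiv 𝕜 (fun z => fderiv 𝕜 (fun a => f a * g a) z v) x w =
      f x * fderiv 𝕜 (fun z => fderiv 𝕜 g z v) x w + fderiv 𝕜 f x v * fderiv 𝕜 g x w +
        fderiv 𝕜 f x w * fderiv 𝕜 g x v + g x * fderiv 𝕜 (fun z => fderiv 𝕜 f z v) x w := by
  have hfirst : (fun z => fderiv 𝕜 (fun a => f a * g a) z v) =ᶠ[𝓝 x]
      fun z => f z * fderiv 𝕜 g z v + g z * fderiv 𝕜 f z v := by
    filter_upwards [eventually_differentiableAt_of_contDiffAt_two hf,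
      eventually_differentiableAt_of_contDiffAt_two hg] with z hfz hgz
    simp [fderiv_fun_mul hfz hgz]
  have hfx := hf.differentiableAt two_ne_zero
  have hgx := hg.differentiableAt two_ne_zero
  have hf' := differentiableAt_fderiv_apply hf v
  have hg' := differentiableAt_fderiv_apply hg v
  rw [hfirst.fderiv_eq, fderiv_fun_add (hfx.fun_mul hg') (hgx.fun_mul hf'),
    fderiv_fun_mul hfx hg', fderiv_fun_mul hgx hf']
  simp only [add_apply, smul_apply, smul_eq_mul]
  ring

theorem fderiv_fderiv_comp_apply (hφ : ContDiffAt 𝕜 2 φ (f x)) (hf : ContDiffAt 𝕜 2 f x)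
    (v w : E) :
    fderiv 𝕜 (fun z => fderiv 𝕜 (fun a => φ (f a)) z v) x w =
      deriv φ (f x) * fderiv 𝕜 (fun z => fderiv 𝕜 f z v) x w +
        deriv (deriv φ) (f x) * (fderiv 𝕜 f x v * fderiv 𝕜 f x w) := by
  have hfirst : (fun z => fderiv 𝕜 (fun a => φ (f a)) z v) =ᶠ[𝓝 x]
      fun z => deriv φ (f z) * fderiv 𝕜 f z v := by
    filter_upwards [eventually_differentiableAt_of_contDiffAt_two hf,
      hf.continuousAt.eventually (eventually_differentiableAt_of_contDiffAt_two hφ)] with z hfz hφz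
    have hcomp : HasFDerivAt (fun a => φ (f a)) (deriv φ (f z) • fderiv 𝕜 f z) z :=
      hφz.hasDerivAt.comp_hasFDerivAt z hfz.hasFDerivAt
    rw [hcomp.fderiv, smul_apply, smul_eq_mul]
  have hφ' : HasDerivAt (deriv φ) (deriv (deriv φ) (f x)) (f x) :=
    (differentiableAt_fderiv_apply hφ 1).hasDerivAt
  have hφf : HasFDerivAt (fun z => deriv φ (f z)) (deriv (deriv φ) (f x) • fderiv 𝕜 f x) x :=
    hφ'.comp_hasFDerivAt x (hf.differentiableAt two_ne_zero).hasFDerivAt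
  rw [hfirst.fderiv_eq, (hφf.fun_mul (differentiableAt_fderiv_apply hf v).hasFDerivAt).fderiv]
  simp only [add_apply, smul_apply, smul_eq_mul]
  ring

end DirectionalDerivatives

theorem norm_rpow_eq_norm_sq_rpow_half {E : Type*} [SeminormedAddCommGroup E] (v : E) (p : ℝ) :
    ‖v‖ ^ p = (‖v‖ ^ 2) ^ (p / 2) := by
  rw [← Real.rpow_natCast_mul (norm_nonneg v), Nat.cast_ofNat, mul_div_cancel₀ p two_ne_zero]

theorem norm_sub_sq_ne_zero {E : Type*} [NormedAddCommGroup E] {x y : E} (hxy : x ≠ y) :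
    ‖x - y‖ ^ 2 ≠ 0 :=
  pow_ne_zero 2 (norm_sub_eq_zero_iff.not.mpr hxy)

theorem contDiff_norm_sub_sq {E : Type*} [NormedAddCommGroup E] [InnerProductSpace ℝ E] (y : E)
    {k : WithTop ℕ∞} : ContDiff ℝ k (fun z => ‖z - y‖ ^ 2) :=
  (contDiff_id.sub contDiff_const).norm_sq ℝ

section Gradient

variable {E : Type*} [NormedAddCommGroup E] [InnerProductSpace ℝ E] [CompleteSpace E]

theorem gradient_rpow_const {f : E → ℝ} {x : E} (hf : DifferentiableAt ℝ f x) (hfx : f x ≠ 0)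
    (p : ℝ) : ∇ (fun z => f z ^ p) x = (p * f x ^ (p - 1)) • ∇ f x := by
  refine HasGradientAt.gradient (hasGradientAt_iff_hasFDerivAt.mpr ?_)
  rw [map_smul, toDual_gradient]
  exact hf.hasFDerivAt.rpow_const (Or.inl hfx)

theorem gradient_norm_sub_sq (x y : E) : ∇ (fun z => ‖z - y‖ ^ 2) x = (2 : ℝ) • (x - y) := by
  refine HasGradientAt.gradient (hasGradientAt_iff_hasFDerivAt.mpr ?_)
  refine ((hasFDerivAt_id (𝕜 := ℝ) x).sub_const y).norm_sq.congr_fderiv ?_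
  ext v
  simp [two_smul]

theorem gradient_norm_sub_rpow {x y : E} (hxy : x ≠ y) (p : ℝ) :
    ∇ (fun z => ‖z - y‖ ^ p) x = (p * ‖x - y‖ ^ (p - 2)) • (x - y) := by
  simp only [norm_rpow_eq_norm_sq_rpow_half]
  rw [gradient_rpow_const ((contDiff_norm_sub_sq y).differentiable one_ne_zero x)
    (norm_sub_sq_ne_zero hxy), gradient_norm_sub_sq, smul_smul]
  ring_nf

end Gradient

theorem fderiv_coord {ι : Type*} [Finite ι] {x : EuclideanSpace ℝ ι} (n : ι) :
    fderiv ℝ (fun z : EuclideanSpace ℝ ι => z n) x = EuclideanSpace.proj n := by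
  have := Fintype.ofFinite ι
  exact (EuclideanSpace.proj n : EuclideanSpace ℝ ι →L[ℝ] ℝ).fderiv

section Coordinates

variable {ι : Type*} [Fintype ι] {x : EuclideanSpace ℝ ι}

theorem contDiff_coord (n : ι) {k : WithTop ℕ∞} :
    ContDiff ℝ k (fun z : EuclideanSpace ℝ ι => z n) :=
  (EuclideanSpace.proj n : EuclideanSpace ℝ ι →L[ℝ] ℝ).contDiff

variable [DecidableEq ι]

theorem gradient_coord (n : ι) :
    ∇ (fun z : EuclideanSpace ℝ ι => z n) x = EuclideanSpace.single n 1 := by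
  refine ext_inner_right ℝ fun v => ?_
  simp [inner_gradient_left, fderiv_coord, EuclideanSpace.inner_single_left]

theorem gradient_coord_rpow {n : ι} (hx : x n ≠ 0) (b : ℝ) :
    ∇ (fun z : EuclideanSpace ℝ ι => z n ^ b) x =
      (b * x n ^ (b - 1)) • EuclideanSpace.single n 1 := by
  rw [gradient_rpow_const ((contDiff_coord n).differentiable one_ne_zero x) hx, gradient_coord]

theorem sum_fderiv_single_mul_fderiv_single (f g : EuclideanSpace ℝ ι → ℝ) :
    ∑ i, fderiv ℝ f x (EuclideanSpace.single i 1) * fderiv ℝ g x (EuclideanSpace.single i 1) =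
      ⟪∇ f x, ∇ g x⟫_ℝ := by
  rw [← (EuclideanSpace.basisFun ι ℝ).sum_inner_mul_inner]
  simp only [EuclideanSpace.basisFun_apply, inner_gradient_left, inner_gradient_right, conj_trivial]

end Coordinates

section Laplacian

variable {N : ℕ} {f g : EuclideanSpace ℝ (Fin N) → ℝ} {x y : EuclideanSpace ℝ (Fin N)}

theorem lap_mul (hf : ContDiffAt ℝ 2 f x) (hg : ContDiffAt ℝ 2 g x) :
    lap (fun z => f z * g z) x = f x * lap g x + 2 * ⟪∇ f x, ∇ g x⟫_ℝ + g x * lap f x := by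
  simp only [lap, fderiv_fderiv_mul_apply hf hg, Finset.sum_add_distrib, ← Finset.mul_sum,
    sum_fderiv_single_mul_fderiv_single]
  ring

theorem lap_comp {φ : ℝ → ℝ} (hφ : ContDiffAt ℝ 2 φ (f x)) (hf : ContDiffAt ℝ 2 f x) :
    lap (fun z => φ (f z)) x =
      deriv φ (f x) * lap f x + deriv (deriv φ) (f x) * ‖∇ f x‖ ^ 2 := by
  simp only [lap, fderiv_fderiv_comp_apply hφ hf, Finset.sum_add_distrib, ← Finset.mul_sum,
    sum_fderiv_single_mul_fderiv_single, real_inner_self_eq_norm_sq]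

theorem lap_rpow_const (hf : ContDiffAt ℝ 2 f x) (hfx : f x ≠ 0) (p : ℝ) :
    lap (fun z => f z ^ p) x =
      p * f x ^ (p - 1) * lap f x + p * (p - 1) * f x ^ (p - 2) * ‖∇ f x‖ ^ 2 := by
  rw [lap_comp (φ := fun s => s ^ p) (Real.contDiffAt_rpow_const_of_ne hfx) hf,
    Real.deriv_rpow_const', deriv_const_mul_field, Real.deriv_rpow_const]
  ring_nf

theorem lap_coord (n : Fin N) : lap (fun z => z n) x = 0 := by
  simp [lap, fderiv_coord]

theorem lap_coord_rpow {n : Fin N} (hx : x n ≠ 0) (b : ℝ) :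
    lap (fun z => z n ^ b) x = b * (b - 1) * x n ^ (b - 2) := by
  simp [lap_rpow_const (contDiff_coord n).contDiffAt hx, lap_coord, gradient_coord]

theorem lap_norm_sub_sq : lap (fun z => ‖z - y‖ ^ 2) x = 2 * N := by
  have hpartial (z : EuclideanSpace ℝ (Fin N)) (i : Fin N) :
      fderiv ℝ (fun a => ‖a - y‖ ^ 2) z (EuclideanSpace.single i 1) = 2 * (z i - y i) := by
    simp [← inner_gradient_left, gradient_norm_sub_sq, EuclideanSpace.inner_single_right]
  have hdiff (i : Fin N) :
      DifferentiableAt ℝ (fun z : EuclideanSpace ℝ (Fin N) => z i - y i) x :=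
    ((contDiff_coord i).differentiable one_ne_zero x).sub_const _
  simp only [lap, hpartial, fderiv_const_mul (hdiff _), fderiv_sub_const, fderiv_coord]
  simp [mul_comm]

theorem lap_norm_sub_rpow (hxy : x ≠ y) (p : ℝ) :
    lap (fun z => ‖z - y‖ ^ p) x = p * (p + N - 2) * ‖x - y‖ ^ (p - 2) := by
  have hne := norm_sub_sq_ne_zero hxy
  have hexp : (‖x - y‖ ^ 2) ^ (p / 2 - 1) = (‖x - y‖ ^ 2) ^ (p / 2 - 2) * ‖x - y‖ ^ 2 := by
    rw [← Real.rpow_add_one hne]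
    ring_nf
  simp only [norm_rpow_eq_norm_sq_rpow_half]
  rw [lap_rpow_const (contDiff_norm_sub_sq y).contDiffAt hne, lap_norm_sub_sq,
    gradient_norm_sub_sq, norm_smul, Real.norm_two, sub_div, div_self two_ne_zero, hexp]
  ring

theorem lap_coord_rpow_mul_norm_sub_rpow {n : Fin N} (hx : x n ≠ 0) (hxy : x ≠ y) (b p : ℝ) :
    lap (fun z => z n ^ b * ‖z - y‖ ^ p) x =
      b * (b - 1) * x n ^ (b - 2) * ‖x - y‖ ^ p +
        2 * b * p * x n ^ (b - 1) * (x n - y n) * ‖x - y‖ ^ (p - 2) +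
        p * (p + N - 2) * x n ^ b * ‖x - y‖ ^ (p - 2) := by
  have hsub : x - y ≠ 0 := sub_ne_zero.mpr hxy
  have hcoord : ContDiffAt ℝ 2 (fun z : EuclideanSpace ℝ (Fin N) => z n ^ b) x :=
    (contDiff_coord n).contDiffAt.rpow_const_of_ne hx
  have hnorm : ContDiffAt ℝ 2 (fun z => ‖z - y‖ ^ p) x :=
    ((contDiffAt_id.sub contDiffAt_const).norm ℝ hsub).rpow_const_of_ne (norm_ne_zero_iff.mpr hsub)
  rw [lap_mul hcoord hnorm, lap_coord_rpow hx, lap_norm_sub_rpow hxy, gradient_coord_rpow hx,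
    gradient_norm_sub_rpow hxy, real_inner_smul_left, real_inner_smul_right,
    EuclideanSpace.inner_single_left, map_one, one_mul, PiLp.sub_apply]
  ring

theorem hardy_poisson_kernel_solution_general {n : Fin N} {κ α : ℝ}
    (hα : α ^ 2 - 2 * α + 4 * κ = 0) (hy : y n = 0) (hx : 0 < x n) :
    -lap (fun z => z n ^ (α / 2) * ‖z - y‖ ^ (-((N : ℝ) - 2 + α))) x -
      κ / x n ^ 2 * (x n ^ (α / 2) * ‖x - y‖ ^ (-((N : ℝ) - 2 + α))) = 0 := by
  have hxy : x ≠ y := by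
    rintro rfl
    exact hx.ne' hy
  have hpow_one : x n ^ (α / 2 - 1) * x n = x n ^ (α / 2) := by
    rw [← Real.rpow_add_one hx.ne', sub_add_cancel]
  have hpow_two : x n ^ (α / 2 - 2) = x n ^ (α / 2) / x n ^ 2 := by
    exact_mod_cast Real.rpow_sub_natCast hx.ne' (α / 2) 2
  rw [lap_coord_rpow_mul_norm_sub_rpow hx.ne' hxy, hy, sub_zero, hpow_two]
  set p : ℝ := -((N : ℝ) - 2 + α) with hp
  have hcancel : p + N - 2 + α = 0 := by
    rw [hp]
    ring
  linear_combination
    (-α * p * ‖x - y‖ ^ (p - 2)) * hpow_one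
      - p * x n ^ (α / 2) * ‖x - y‖ ^ (p - 2) * hcancel
      - (x n ^ (α / 2) / x n ^ 2 * ‖x - y‖ ^ p / 4) * hα

end Laplacian

/-- for `κ ∈ (0,1/4]`, `α₊ = 1 + √(1-4κ)`, and any boundary point `y`
(`y_N = 0`), the model Poisson kernel `u(x) = x_N^{α₊/2} |x-y|^{-(N-2+α₊)}` satisfies
`-Δu - κ x_N⁻² u = 0` on `H \ {y}`, where `H = {x : x_N > 0}`. -/
theorem hardy_poisson_kernel_solution (N : ℕ) (hN : 2 ≤ N) (κ : ℝ)
    (hκ0 : 0 < κ) (hκ4 : κ ≤ 1/4) (α : ℝ) (hα : α = 1 + Real.sqrt (1 - 4*κ)) :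
    let n : Fin N := ⟨N - 1, by omega⟩
    ∀ y : EuclideanSpace ℝ (Fin N), y n = 0 →
    let u : EuclideanSpace ℝ (Fin N) → ℝ :=
      fun x => (x n) ^ (α/2) * ‖x - y‖ ^ (-((N : ℝ) - 2 + α))
    ∀ x : EuclideanSpace ℝ (Fin N), 0 < x n → x ≠ y →
      -lap u x - κ / (x n)^2 * u x = 0 := by
  intro n y hy _ x hx _
  refine hardy_poisson_kernel_solution_general ?_ hy hx
  rw [hα]
  linear_combination Real.sq_sqrt (show 0 ≤ 1 - 4 * κ by linarith)
end

section
/- Let N ≥ 2 be an integer, κ ∈ (0, 1/4], and α₊ = 1 + √(1−4κ). The function ρ(θ) = (cos θ)^{α₊/2} satisfies, for every θ ∈ (0, π/2), the ordinary differential equation −ρ''(θ) − (N−2)(cos θ/ sin θ) ρ'(θ) − κ (cos θ)^{−2} ρ(θ) = μ_{κ,1} ρ(θ), where μ_{κ,1} = (α₊/2)(N + α₊/2 − 2). (This is the zonal form of the statement that ρ_κ(σ) = (e_N·σ)^{α₊/2} is the first eigenfunction of the spherical Hardy operator on the upper half-sphere with eigenvalue μ_{κ,1}.) -/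
open Real

/-!
Put `γ = α₊ / 2`. Trading `sin²` for `1 - cos²` gives
`Δ' (cos θ ^ γ) = γ (γ - 1) cos θ ^ (γ - 2) - γ (d + γ - 2) cos θ ^ γ`. The singular term is
cancelled by the Hardy potential exactly when `κ = γ (1 - γ)`, the indicial equation at the
boundary, whose larger root is `α₊ / 2`; what remains is the eigenvalue.
-/

/-- The Laplace–Beltrami operator `Δ'` of the unit sphere of `ℝ^d` acting on functions of the
azimuthal angle `θ`. The dimension `d` is a real parameter. -/
noncomputable def zonalLaplacian (d : ℝ) (f : ℝ → ℝ) (θ : ℝ) : ℝ :=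
  deriv (deriv f) θ + (d - 2) * (cos θ / sin θ) * deriv f θ

/-- The spherical Hardy operator `L'_κ = -Δ' - κ (cos θ)⁻²` acting on functions of the azimuthal
angle `θ`. -/
noncomputable def zonalHardyOperator (d κ : ℝ) (f : ℝ → ℝ) (θ : ℝ) : ℝ :=
  -zonalLaplacian d f θ - κ / cos θ ^ 2 * f θ

theorem rpow_sub_two {x : ℝ} (hx : x ≠ 0) (y : ℝ) : x ^ (y - 2) = x ^ y / x ^ 2 :=
  mod_cast rpow_sub_natCast hx y 2

section CosRpow

variable (d γ : ℝ) {θ : ℝ}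

theorem deriv_cos_rpow (hcos : cos θ ≠ 0) :
    deriv (fun x => cos x ^ γ) θ = -sin θ * γ * cos θ ^ (γ - 1) :=
  ((hasDerivAt_cos θ).rpow_const (.inl hcos)).deriv

theorem deriv_deriv_cos_rpow (hcos : cos θ ≠ 0) :
    deriv (deriv fun x => cos x ^ γ) θ =
      γ * (γ - 1) * cos θ ^ (γ - 2) - γ ^ 2 * cos θ ^ γ := by
  have deriv_eventuallyEq : deriv (fun x => cos x ^ γ) =ᶠ[nhds θ]
      fun x => -sin x * γ * cos x ^ (γ - 1) :=
    (continuous_cos.continuousAt.eventually_ne hcos).mono fun _ => deriv_cos_rpow γ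
  have hasDerivAt_deriv : HasDerivAt (fun x => -sin x * γ * cos x ^ (γ - 1))
      (-cos θ * γ * cos θ ^ (γ - 1) +
        -sin θ * γ * (-sin θ * (γ - 1) * cos θ ^ (γ - 1 - 1))) θ :=
    ((hasDerivAt_sin θ).neg.mul_const γ).mul ((hasDerivAt_cos θ).rpow_const (.inl hcos))
  calc
    _ = -γ * (cos θ * cos θ ^ (γ - 1)) +
          γ * (γ - 1) * sin θ ^ 2 * cos θ ^ (γ - 1 - 1) := by
      rw [deriv_eventuallyEq.deriv_eq, hasDerivAt_deriv.deriv]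
      ring
    _ = γ * (γ - 1) * cos θ ^ (γ - 2) - γ ^ 2 * cos θ ^ γ := by
      rw [sin_sq, show γ - 1 - 1 = γ - 2 by ring, rpow_sub_one hcos, rpow_sub_two hcos]
      field_simp
      ring

theorem zonalLaplacian_cos_rpow (hcos : cos θ ≠ 0) (hsin : sin θ ≠ 0) :
    zonalLaplacian d (fun x => cos x ^ γ) θ =
      γ * (γ - 1) * cos θ ^ (γ - 2) - γ * (d + γ - 2) * cos θ ^ γ := by
  have drift : cos θ / sin θ * deriv (fun x => cos x ^ γ) θ = -γ * cos θ ^ γ := by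
    rw [deriv_cos_rpow γ hcos, rpow_sub_one hcos]
    field_simp
  rw [zonalLaplacian, deriv_deriv_cos_rpow γ hcos, mul_assoc (d - 2), drift]
  ring

end CosRpow

theorem hardyExponent_half_mul_one_sub {κ : ℝ} (hκ : κ ≤ 1 / 4) :
    (1 + √(1 - 4 * κ)) / 2 * (1 - (1 + √(1 - 4 * κ)) / 2) = κ := by
  have sq_discriminant : √(1 - 4 * κ) ^ 2 = 1 - 4 * κ := sq_sqrt (by linarith)
  linear_combination -sq_discriminant / 4

theorem spherical_hardy_first_eigenfunction_general {d κ γ θ : ℝ} (hγ : γ * (1 - γ) = κ)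
    (hcos : cos θ ≠ 0) (hsin : sin θ ≠ 0) :
    zonalHardyOperator d κ (fun x => cos x ^ γ) θ = γ * (d + γ - 2) * cos θ ^ γ := by
  rw [zonalHardyOperator, zonalLaplacian_cos_rpow d γ hcos hsin, rpow_sub_two hcos, ← hγ]
  ring

/-- for `κ ∈ (0,1/4]` and `α₊ = 1 + √(1-4κ)`, the zonal function
`ρ(θ) = (cos θ)^{α₊/2}` satisfies on `(0, π/2)` the ODE
`-ρ'' - (N-2)(cos θ/sin θ) ρ' - κ (cos θ)⁻² ρ = μ_{κ,1} ρ`, with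
`μ_{κ,1} = (α₊/2)(N + α₊/2 - 2)`: it is the first eigenfunction of the spherical Hardy
operator on the upper half-sphere. -/
theorem spherical_hardy_first_eigenfunction (N : ℕ) (hN : 2 ≤ N) (κ : ℝ)
    (hκ0 : 0 < κ) (hκ4 : κ ≤ 1/4) (α : ℝ) (hα : α = 1 + Real.sqrt (1 - 4*κ)) :
    let ρ : ℝ → ℝ := fun θ => (Real.cos θ) ^ (α/2)
    let μ : ℝ := (α/2) * ((N : ℝ) + α/2 - 2)
    ∀ θ ∈ Set.Ioo 0 (π/2),
      -(deriv (deriv ρ) θ) - ((N : ℝ) - 2) * (Real.cos θ / Real.sin θ) * deriv ρ θ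
        - κ / (Real.cos θ)^2 * ρ θ = μ * ρ θ := by
  subst hα
  intro ρ μ θ hθ
  have hcos : cos θ ≠ 0 := (cos_pos_of_mem_Ioo ⟨by linarith [hθ.1, pi_pos], hθ.2⟩).ne'
  have hsin : sin θ ≠ 0 := (sin_pos_of_pos_of_lt_pi hθ.1 (by linarith [hθ.2, pi_pos])).ne'
  rw [← neg_add']
  exact spherical_hardy_first_eigenfunction_general (hardyExponent_half_mul_one_sub hκ4) hcos hsin
end

section
/- Let N ≥ 2 be an integer, κ ∈ (0, 1/4], α₊ = 1 + √(1−4κ), and q_c = (2N+α₊)/(2N−4+α₊). There exists a constant c = c(N, κ) > 0 such that for every boundary point y ∈ ∂H = {x ∈ ℝ^N : x_N = 0} and every λ > 0, ∫_{E_λ(y)} x_N^{α₊/2} dx ≤ c λ^{−q_c}, where E_λ(y) = {x ∈ H : x_N^{α₊/2} |x − y|^{−(N−2+α₊)} > λ}. (This is the weak L^{q_c} estimate, with respect to the weight d^{α₊/2}, for the model Poisson kernel of the Hardy operator with a boundary pole.) -/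
open Real MeasureTheory

/-!
Where `d x ≤ |x - y|`, the kernel `d(x) ^ a |x - y| ^ (-b)` is at most `|x - y| ^ (a - b)`. For
`a < b` its superlevel set at height `lam` therefore lies in the ball around the pole `y` of radius
`R = lam ^ (a - b)⁻¹`, on which the weight `d ^ a` is at most `R ^ a`. If balls of radius `R` have
measure at most `C R ^ D`, the weighted measure of the superlevel set is at most
`C R ^ (D + a) = C lam ^ (-(D + a) / (b - a))`.
-/

section PseudoMetricSpace

variable {X : Type*} [PseudoMetricSpace X] {d : X → ℝ} {a b C D lam : ℝ} {x y : X}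

/-- The model Poisson kernel `d(x) ^ a * dist(x, y) ^ (-b)` with pole `y`, where `d` plays the role
of the distance to the boundary. For the Hardy operator in dimension `N` the exponents are
`a = α₊ / 2` and `b = N - 2 + α₊`. -/
noncomputable def modelPoissonKernel (d : X → ℝ) (a b : ℝ) (y x : X) : ℝ :=
  d x ^ a * dist x y ^ (-b)

/-- The set `E_λ(y)` of points of the domain `{d > 0}` at which the model Poisson kernel with pole
`y` exceeds `lam`. -/
def modelPoissonSuperlevelSet (d : X → ℝ) (a b lam : ℝ) (y : X) : Set X :=
  {x | 0 < d x ∧ lam < modelPoissonKernel d a b y x}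

theorem modelPoissonKernel_le_dist_rpow (ha : 0 ≤ a) (hx : 0 < d x) (hxy : d x ≤ dist x y) :
    modelPoissonKernel d a b y x ≤ dist x y ^ (a - b) :=
  calc d x ^ a * dist x y ^ (-b) ≤ dist x y ^ a * dist x y ^ (-b) := by gcongr
    _ = dist x y ^ (a - b) := by rw [← rpow_add (hx.trans_le hxy), sub_eq_add_neg]

theorem modelPoissonSuperlevelSet_subset_ball (hd : ∀ x, d x ≤ dist x y) (ha : 0 ≤ a) (hab : a < b)
    (hlam : 0 < lam) : modelPoissonSuperlevelSet d a b lam y ⊆ Metric.ball y (lam ^ (a - b)⁻¹) := by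
  rintro x ⟨hx, hlam_lt⟩
  have hdist : 0 < dist x y := hx.trans_le (hd x)
  rw [Metric.mem_ball, lt_rpow_inv_iff_of_neg hdist hlam (sub_neg.mpr hab)]
  exact hlam_lt.trans_le (modelPoissonKernel_le_dist_rpow ha hx (hd x))

theorem setLIntegral_modelPoissonSuperlevelSet_le [MeasurableSpace X] (μ : Measure X)
    (hd : ∀ x, d x ≤ dist x y) (ha : 0 ≤ a) (hab : a < b) (hlam : 0 < lam) :
    ∫⁻ x in modelPoissonSuperlevelSet d a b lam y, ENNReal.ofReal (d x ^ a) ∂μ ≤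
      ENNReal.ofReal ((lam ^ (a - b)⁻¹) ^ a) * μ (Metric.ball y (lam ^ (a - b)⁻¹)) := by
  have hsub := modelPoissonSuperlevelSet_subset_ball hd ha hab hlam
  have hweight : ∀ x ∈ modelPoissonSuperlevelSet d a b lam y, d x ^ a ≤ (lam ^ (a - b)⁻¹) ^ a :=
    fun x hx ↦ rpow_le_rpow hx.1.le ((hd x).trans (hsub hx).le) ha
  calc ∫⁻ x in modelPoissonSuperlevelSet d a b lam y, ENNReal.ofReal (d x ^ a) ∂μ
      ≤ ∫⁻ _ in modelPoissonSuperlevelSet d a b lam y, ENNReal.ofReal ((lam ^ (a - b)⁻¹) ^ a) ∂μ :=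
        setLIntegral_mono measurable_const fun x hx ↦ ENNReal.ofReal_le_ofReal (hweight x hx)
    _ = ENNReal.ofReal ((lam ^ (a - b)⁻¹) ^ a) * μ (modelPoissonSuperlevelSet d a b lam y) :=
        setLIntegral_const _ _
    _ ≤ ENNReal.ofReal ((lam ^ (a - b)⁻¹) ^ a) * μ (Metric.ball y (lam ^ (a - b)⁻¹)) := by
        gcongr

theorem poisson_kernel_weak_type_general [MeasurableSpace X] {μ : Measure X}
    (hμ : ∀ r, 0 < r → μ (Metric.ball y r) ≤ ENNReal.ofReal (C * r ^ D))
    (hd : ∀ x, d x ≤ dist x y) (ha : 0 ≤ a) (hab : a < b) (hlam : 0 < lam) :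
    ∫⁻ x in modelPoissonSuperlevelSet d a b lam y, ENNReal.ofReal (d x ^ a) ∂μ ≤
      ENNReal.ofReal (C * lam ^ (-((D + a) / (b - a)))) := by
  set R := lam ^ (a - b)⁻¹ with hR
  have hRpos : 0 < R := rpow_pos_of_pos hlam _
  have hpow : R ^ (D + a) = lam ^ (-((D + a) / (b - a))) := by
    rw [hR, ← rpow_mul hlam.le, inv_mul_eq_div, ← div_neg, neg_sub]
  calc ∫⁻ x in modelPoissonSuperlevelSet d a b lam y, ENNReal.ofReal (d x ^ a) ∂μ
      ≤ ENNReal.ofReal (R ^ a) * μ (Metric.ball y R) :=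
        setLIntegral_modelPoissonSuperlevelSet_le μ hd ha hab hlam
    _ ≤ ENNReal.ofReal (R ^ a) * ENNReal.ofReal (C * R ^ D) := by gcongr; exact hμ R hRpos
    _ = ENNReal.ofReal (C * lam ^ (-((D + a) / (b - a)))) := by
        rw [← ENNReal.ofReal_mul (by positivity), ← hpow, rpow_add hRpos]
        ring_nf

end PseudoMetricSpace

theorem addHaar_ball_eq_ofReal_mul_rpow {E : Type*} [NormedAddCommGroup E] [NormedSpace ℝ E]
    [MeasurableSpace E] [BorelSpace E] [FiniteDimensional ℝ E] (μ : Measure E) [μ.IsAddHaarMeasure]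
    (y : E) {r : ℝ} (hr : 0 < r) :
    μ (Metric.ball y r) =
      ENNReal.ofReal (μ.real (Metric.ball 0 1) * r ^ (Module.finrank ℝ E : ℝ)) := by
  rw [Measure.addHaar_ball_of_pos μ y hr, rpow_natCast, mul_comm,
    ENNReal.ofReal_mul measureReal_nonneg, ofReal_measureReal]

theorem euclideanSpace_apply_le_dist {ι : Type*} [Fintype ι] {i : ι} {y : EuclideanSpace ℝ ι}
    (hy : y i = 0) (x : EuclideanSpace ℝ ι) : x i ≤ dist x y :=
  calc x i = (x - y) i := by rw [PiLp.sub_apply, hy, sub_zero]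
    _ ≤ ‖(x - y) i‖ := le_norm_self _
    _ ≤ dist x y := dist_eq_norm x y ▸ PiLp.norm_apply_le (x - y) i

theorem hardy_critical_exponent_eq (D α : ℝ) :
    (D + α / 2) / (D - 2 + α - α / 2) = (2 * D + α) / (2 * D - 4 + α) := by
  rw [← mul_div_mul_left _ _ (two_ne_zero (α := ℝ))]
  congr 1 <;> ring

/-- weak `L^{q_c}` estimate for the model Poisson kernel of the Hardy
operator with respect to the weight `x_N^{α₊/2}`: there is `c = c(N,κ) > 0` such that for
every boundary pole `y` (`y_N = 0`) and every `λ > 0`,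
`∫_{E_λ(y)} x_N^{α₊/2} dx ≤ c λ^{-q_c}` where
`E_λ(y) = {x ∈ H : x_N^{α₊/2}|x-y|^{-(N-2+α₊)} > λ}` and `q_c = (2N+α₊)/(2N-4+α₊)`. -/
theorem poisson_kernel_weak_type (N : ℕ) (hN : 2 ≤ N) (κ : ℝ)
    (hκ0 : 0 < κ) (hκ4 : κ ≤ 1/4) (α : ℝ) (hα : α = 1 + Real.sqrt (1 - 4*κ)) :
    let n : Fin N := ⟨N - 1, by omega⟩
    let qc : ℝ := (2*(N : ℝ) + α) / (2*(N : ℝ) - 4 + α)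
    ∃ c : ℝ, 0 < c ∧
      ∀ y : EuclideanSpace ℝ (Fin N), y n = 0 → ∀ lam : ℝ, 0 < lam →
        (∫⁻ x in {x : EuclideanSpace ℝ (Fin N) |
            0 < x n ∧ (x n) ^ (α/2) * ‖x - y‖ ^ (-((N : ℝ) - 2 + α)) > lam},
          ENNReal.ofReal ((x n) ^ (α/2)))
        ≤ ENNReal.ofReal (c * lam ^ (-qc)) := by
  intro n qc
  have hα_one_le : 1 ≤ α := hα ▸ le_add_of_nonneg_right (sqrt_nonneg _)
  have hN_real : (2 : ℝ) ≤ N := mod_cast hN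
  refine ⟨volume.real (Metric.ball (0 : EuclideanSpace ℝ (Fin N)) 1),
    ENNReal.toReal_pos (Metric.measure_ball_pos _ _ one_pos).ne' measure_ball_lt_top.ne, ?_⟩
  intro y hy lam hlam
  have hweak := poisson_kernel_weak_type_general (a := α / 2) (b := N - 2 + α)
    (fun r hr ↦ (addHaar_ball_eq_ofReal_mul_rpow volume y hr).le)
    (euclideanSpace_apply_le_dist hy) (by linarith) (by linarith) hlam
  simpa only [modelPoissonSuperlevelSet, modelPoissonKernel, dist_eq_norm,
    finrank_euclideanSpace_fin, hardy_critical_exponent_eq] using hweak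
end

section
/- Let N ≥ 2 be an integer, κ ∈ (0, 1/4], α₊ = 1 + √(1−4κ), and q_c = (2N+α₊)/(2N−4+α₊). There exists a constant c = c(N, κ) > 0 with the following property: for every finite positive Borel measure μ on ℝ^{N−1}, if Kμ(x) = ∫_{ℝ^{N−1}} x_N^{α₊/2} |x − (y,0)|^{−(N−2+α₊)} dμ(y) for x ∈ H = {x ∈ ℝ^N : x_N > 0}, then for every λ > 0, ∫_{{x ∈ H : Kμ(x) > λ}} x_N^{α₊/2} dx ≤ c (μ(ℝ^{N−1})/λ)^{q_c}. (This is the half-space model of the distribution-function estimate for the Poisson operator of the Hardy operator acting on boundary measures.) -/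
open Real MeasureTheory

/-!
Two facts combine. First, every single kernel `x ↦ K(x, y)` lies in weak `L^q` of the weighted
measure, uniformly in the boundary point `y`: since `d(x) ≤ |x - y|`, the set `{K(·, y) > s}` is
contained in a ball of radius `s ^ (-1/b)` around `y`, whose weighted measure is computed by
scaling. Second, for `q > 1` weak `L^q` is stable under superposition: with `T = λ / (2 μ(Y))`,
the part of `K` below the level `T` contributes at most `λ / 2` to `Kμ`, and the part above it is
integrable by the layer-cake formula and is handled by Markov's inequality.
-/

section WeakLp

variable {X Y : Type*} [MeasurableSpace X] [MeasurableSpace Y]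

/-- The weak `L^q(ν)` (Marcinkiewicz space) bound `ν {f > s} ≤ A s ^ (-q)` for all levels `s > 0`.
It is one-sided: only the positive part of `f` is controlled. -/
def HasWeakLpBound (ν : Measure X) (f : X → ℝ) (q A : ℝ) : Prop :=
  ∀ s, 0 < s → ν {x | s < f x} ≤ ENNReal.ofReal (A * s ^ (-q))

lemma lintegral_Ioi_ofReal_rpow_neg {q T : ℝ} (hq : 1 < q) (hT : 0 < T) :
    ∫⁻ s in Set.Ioi T, ENNReal.ofReal (s ^ (-q)) = ENNReal.ofReal (T ^ (1 - q) / (q - 1)) := by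
  have nonneg : ∀ᵐ s ∂volume.restrict (Set.Ioi T), 0 ≤ s ^ (-q) :=
    ae_restrict_of_forall_mem measurableSet_Ioi fun s hs ↦ rpow_nonneg (hT.trans hs).le _
  rw [← ofReal_integral_eq_lintegral_ofReal (integrableOn_Ioi_rpow_of_lt (by linarith) hT) nonneg,
    integral_Ioi_rpow_of_lt (by linarith) hT, neg_div, ← div_neg]
  ring_nf

lemma lintegral_ofReal_sub_eq_lintegral_Ioi_measure (ν : Measure X) {f : X → ℝ}
    (hf : Measurable f) (T : ℝ) :
    ∫⁻ x, ENNReal.ofReal (f x - T) ∂ν = ∫⁻ s in Set.Ioi T, ν {x | s < f x} := by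
  have shift : MeasurePreserving (fun s : ℝ ↦ s + T) := measurePreserving_add_right volume T
  calc ∫⁻ x, ENNReal.ofReal (f x - T) ∂ν
      = ∫⁻ x, ENNReal.ofReal (max (f x - T) 0) ∂ν := by simp [ENNReal.ofReal_max]
    _ = ∫⁻ s in Set.Ioi 0, ν {x | s < max (f x - T) 0} :=
        lintegral_eq_lintegral_meas_lt ν (.of_forall fun x ↦ le_max_right _ _) (by fun_prop)
    _ = ∫⁻ s in Set.Ioi 0, ν {x | s + T < f x} := by
        refine setLIntegral_congr_fun measurableSet_Ioi fun s (hs : 0 < s) ↦ ?_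
        simp [lt_sub_iff_add_lt, hs.not_gt]
    _ = ∫⁻ s in Set.Ioi T, ν {x | s < f x} := by
        rw [← shift.setLIntegral_comp_preimage_emb (measurableEmbedding_addRight T) _ (Set.Ioi T),
          Set.preimage_add_const_Ioi, sub_self]

lemma HasWeakLpBound.lintegral_ofReal_sub_le {ν : Measure X} {f : X → ℝ} {q A T : ℝ}
    (h : HasWeakLpBound ν f q A) (hf : Measurable f) (hq : 1 < q) (hT : 0 < T) :
    ∫⁻ x, ENNReal.ofReal (f x - T) ∂ν ≤ ENNReal.ofReal (A / (q - 1) * T ^ (1 - q)) := by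
  have : 0 < q - 1 := sub_pos.2 hq
  calc ∫⁻ x, ENNReal.ofReal (f x - T) ∂ν
      = ∫⁻ s in Set.Ioi T, ν {x | s < f x} :=
        lintegral_ofReal_sub_eq_lintegral_Ioi_measure ν hf T
    _ ≤ ∫⁻ s in Set.Ioi T, ENNReal.ofReal A * ENNReal.ofReal (s ^ (-q)) := by
        refine setLIntegral_mono' measurableSet_Ioi fun s hs ↦ ?_
        have hs : 0 < s := hT.trans hs
        rw [← ENNReal.ofReal_mul' (by positivity)]
        exact h s hs
    _ = ENNReal.ofReal (A / (q - 1) * T ^ (1 - q)) := by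
        rw [lintegral_const_mul' _ _ ENNReal.ofReal_ne_top, lintegral_Ioi_ofReal_rpow_neg hq hT,
          ← ENNReal.ofReal_mul' (by positivity), mul_div_left_comm, mul_comm]

lemma ofReal_integral_le_lintegral_ofReal (μ : Measure Y) (f : Y → ℝ) :
    ENNReal.ofReal (∫ y, f y ∂μ) ≤ ∫⁻ y, ENNReal.ofReal (f y) ∂μ := by
  by_cases hf : Integrable f μ
  · rw [integral_eq_lintegral_pos_part_sub_lintegral_neg_part hf]
    exact (ENNReal.ofReal_le_ofReal (sub_le_self _ ENNReal.toReal_nonneg)).trans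
      ENNReal.ofReal_toReal_le
  · simp [integral_undef hf]

lemma half_le_lintegral_ofReal_sub_of_lt_integral (μ : Measure Y) [IsFiniteMeasure μ]
    {f : Y → ℝ} {s T : ℝ} (hs : 0 ≤ s) (hT : T * μ.real Set.univ = s / 2)
    (hf : s < ∫ y, f y ∂μ) :
    ENNReal.ofReal (s / 2) ≤ ∫⁻ y, ENNReal.ofReal (f y - T) ∂μ := by
  have low : ∫⁻ _ : Y, ENNReal.ofReal T ∂μ = ENNReal.ofReal (s / 2) := by
    rw [lintegral_const, ← hT, ENNReal.ofReal_mul' measureReal_nonneg, ofReal_measureReal]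
  refine (ENNReal.add_le_add_iff_left (ENNReal.ofReal_ne_top (r := s / 2))).1 ?_
  calc ENNReal.ofReal (s / 2) + ENNReal.ofReal (s / 2)
      = ENNReal.ofReal s := by rw [← ENNReal.ofReal_add (by linarith) (by linarith), add_halves]
    _ ≤ ENNReal.ofReal (∫ y, f y ∂μ) := ENNReal.ofReal_le_ofReal hf.le
    _ ≤ ∫⁻ y, ENNReal.ofReal (f y) ∂μ := ofReal_integral_le_lintegral_ofReal μ f
    _ ≤ ∫⁻ y, (ENNReal.ofReal T + ENNReal.ofReal (f y - T)) ∂μ := by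
        refine lintegral_mono fun y ↦ ?_
        simpa using ENNReal.ofReal_add_le (p := T) (q := f y - T)
    _ = ENNReal.ofReal (s / 2) + ∫⁻ y, ENNReal.ofReal (f y - T) ∂μ := by
        rw [lintegral_add_left measurable_const, low]

theorem hasWeakLpBound_integral {ν : Measure X} [SFinite ν] {k : X → Y → ℝ} {q A : ℝ}
    (h : ∀ y, HasWeakLpBound ν (fun x ↦ k x y) q A) (hk : Measurable (Function.uncurry k))
    (hq : 1 < q) (μ : Measure Y) [IsFiniteMeasure μ] :
    HasWeakLpBound ν (fun x ↦ ∫ y, k x y ∂μ) q (A / (q - 1) * (2 * μ.real Set.univ) ^ q) := by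
  intro s hs
  rcases eq_zero_or_neZero μ with rfl | hμ
  · simp [hs.not_gt]
  have hM : 0 < μ.real Set.univ := measureReal_univ_pos
  set M := μ.real Set.univ
  set T := s / (2 * M)
  have hT : 0 < T := by positivity
  have hTM : T * M = s / 2 := by simp only [T]; field_simp
  have upper_meas : Measurable (Function.uncurry fun x y ↦ ENNReal.ofReal (k x y - T)) :=
    (hk.sub_const T).ennreal_ofReal
  calc ν {x | s < ∫ y, k x y ∂μ}
      ≤ ν {x | ENNReal.ofReal (s / 2) ≤ ∫⁻ y, ENNReal.ofReal (k x y - T) ∂μ} :=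
        measure_mono fun x ↦ half_le_lintegral_ofReal_sub_of_lt_integral μ hs.le hTM
    _ ≤ (∫⁻ x, ∫⁻ y, ENNReal.ofReal (k x y - T) ∂μ ∂ν) / ENNReal.ofReal (s / 2) :=
        meas_ge_le_lintegral_div upper_meas.lintegral_prod_right.aemeasurable
          (by simpa using hs) ENNReal.ofReal_ne_top
    _ = (∫⁻ y, ∫⁻ x, ENNReal.ofReal (k x y - T) ∂ν ∂μ) / ENNReal.ofReal (s / 2) := by
        rw [lintegral_lintegral_swap upper_meas.aemeasurable]
    _ ≤ (∫⁻ _ : Y, ENNReal.ofReal (A / (q - 1) * T ^ (1 - q)) ∂μ) / ENNReal.ofReal (s / 2) := by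
        gcongr with y
        exact (h y).lintegral_ofReal_sub_le hk.of_uncurry_right hq hT
    _ = ENNReal.ofReal (A / (q - 1) * T ^ (1 - q) * M / (s / 2)) := by
        rw [lintegral_const, ← ofReal_measureReal, ← ENNReal.ofReal_mul' measureReal_nonneg,
          ENNReal.ofReal_div_of_pos (half_pos hs)]
    _ = ENNReal.ofReal (A / (q - 1) * (2 * M) ^ q * s ^ (-q)) := by
        congr 1
        rw [rpow_sub hT, rpow_one, div_rpow hs.le (by positivity), rpow_neg hs.le]
        simp only [T]
        field_simp

end WeakLp

section BoundaryWeight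

variable {X : Type*} [MeasurableSpace X]

/-- The measure `δ(x) ^ w dx` on the domain `{δ > 0}`, for `δ` the distance to the boundary. The
base measure is restricted to the domain because `δ ^ w` is a junk value where `δ < 0`. -/
noncomputable def boundaryWeightedMeasure (m : Measure X) (δ : X → ℝ) (w : ℝ) : Measure X :=
  (m.restrict {x | 0 < δ x}).withDensity fun x ↦ ENNReal.ofReal (δ x ^ w)

variable (m : Measure X) [SFinite m] {δ : X → ℝ}

instance (w : ℝ) : SFinite (boundaryWeightedMeasure m δ w) :=
  inferInstanceAs (SFinite (Measure.withDensity _ _))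

lemma boundaryWeightedMeasure_apply (hδ : Measurable δ) (w : ℝ) (s : Set X) :
    boundaryWeightedMeasure m δ w s =
      ∫⁻ x in {x | 0 < δ x ∧ x ∈ s}, ENNReal.ofReal (δ x ^ w) ∂m := by
  rw [boundaryWeightedMeasure, withDensity_apply',
    Measure.restrict_restrict' (measurableSet_lt measurable_const hδ), Set.inter_comm]
  rfl

end BoundaryWeight

section BoundaryKernel

variable {E : Type*} [NormedAddCommGroup E] {δ : E → ℝ} {y : E}

/-- The model Poisson kernel `δ(x) ^ a |x - y| ^ (-(b + a))`, where `δ` is the distance to the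
boundary and `y` is a boundary point. The decay exponent is split so that the
kernel is homogeneous of degree `-b`. -/
noncomputable def boundaryKernel (δ : E → ℝ) (a b : ℝ) (x y : E) : ℝ :=
  δ x ^ a * ‖x - y‖ ^ (-(b + a))

lemma le_norm_sub_of_lipschitzWith_of_eq_zero (hδ : LipschitzWith 1 δ) (hy : δ y = 0) (x : E) :
    δ x ≤ ‖x - y‖ := by
  simpa [hy, dist_eq_norm] using hδ.le_add_mul x y

lemma boundaryKernel_le_rpow_neg (hδ : LipschitzWith 1 δ) (hy : δ y = 0) {a b : ℝ} (ha : 0 ≤ a)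
    {x : E} (hx : 0 < δ x) : boundaryKernel δ a b x y ≤ ‖x - y‖ ^ (-b) := by
  have hle : δ x ≤ ‖x - y‖ := le_norm_sub_of_lipschitzWith_of_eq_zero hδ hy x
  calc δ x ^ a * ‖x - y‖ ^ (-(b + a))
      ≤ ‖x - y‖ ^ a * ‖x - y‖ ^ (-(b + a)) := by gcongr
    _ = ‖x - y‖ ^ (-b) := by rw [← rpow_add (hx.trans_le hle)]; ring_nf

lemma mem_ball_of_lt_boundaryKernel (hδ : LipschitzWith 1 δ) (hy : δ y = 0) {a b s : ℝ}
    (ha : 0 ≤ a) (hb : 0 < b) (hs : 0 < s) {x : E} (hx : 0 < δ x)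
    (hsx : s < boundaryKernel δ a b x y) : x ∈ Metric.ball y (s ^ (-b⁻¹)) := by
  have hxy : 0 < ‖x - y‖ := hx.trans_le (le_norm_sub_of_lipschitzWith_of_eq_zero hδ hy x)
  have level : s < ‖x - y‖ ^ (-b) := hsx.trans_le (boundaryKernel_le_rpow_neg hδ hy ha hx)
  rw [mem_ball_iff_norm, ← inv_neg]
  exact (lt_rpow_inv_iff_of_neg hxy hs (neg_neg_of_pos hb)).2 level

variable [NormedSpace ℝ E] [FiniteDimensional ℝ E] [MeasurableSpace E] [BorelSpace E]

variable (m : Measure E) [m.IsAddHaarMeasure]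

lemma boundaryWeightedMeasure_ball_le (hδ : LipschitzWith 1 δ) (hy : δ y = 0) {w ρ : ℝ}
    (hw : 0 ≤ w) (hρ : 0 < ρ) :
    boundaryWeightedMeasure m δ w (Metric.ball y ρ) ≤
      ENNReal.ofReal (m.real (Metric.ball 0 1) * ρ ^ (Module.finrank ℝ E + w)) := by
  have hδm : Measurable δ := hδ.continuous.measurable
  calc boundaryWeightedMeasure m δ w (Metric.ball y ρ)
      = ∫⁻ x in {x | 0 < δ x ∧ x ∈ Metric.ball y ρ}, ENNReal.ofReal (δ x ^ w) ∂m :=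
        boundaryWeightedMeasure_apply m hδm w _
    _ ≤ ∫⁻ _ in {x | 0 < δ x ∧ x ∈ Metric.ball y ρ}, ENNReal.ofReal (ρ ^ w) ∂m := by
        refine setLIntegral_mono'
          ((measurableSet_lt measurable_const hδm).inter measurableSet_ball) fun x hx ↦ ?_
        have hxρ : δ x ≤ ρ :=
          (le_norm_sub_of_lipschitzWith_of_eq_zero hδ hy x).trans (mem_ball_iff_norm.1 hx.2).le
        have hx0 : 0 ≤ δ x := hx.1.le
        gcongr
    _ ≤ ENNReal.ofReal (ρ ^ w) * m (Metric.ball y ρ) := by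
        rw [setLIntegral_const]
        gcongr
        exact fun _ hx ↦ hx.2
    _ = ENNReal.ofReal (m.real (Metric.ball 0 1) * ρ ^ (Module.finrank ℝ E + w)) := by
        rw [Measure.addHaar_ball_of_pos m y hρ, ← ofReal_measureReal,
          ← ENNReal.ofReal_mul (by positivity), ← ENNReal.ofReal_mul (by positivity),
          rpow_add hρ, rpow_natCast]
        ring_nf

lemma hasWeakLpBound_boundaryKernel (hδ : LipschitzWith 1 δ) (hy : δ y = 0) {a b w q : ℝ}
    (ha : 0 ≤ a) (hb : 0 < b) (hw : 0 ≤ w) (hq : q * b = Module.finrank ℝ E + w) :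
    HasWeakLpBound (boundaryWeightedMeasure m δ w) (fun x ↦ boundaryKernel δ a b x y) q
      (m.real (Metric.ball 0 1)) := by
  intro s hs
  have hδm : Measurable δ := hδ.continuous.measurable
  have exponent : -b⁻¹ * (Module.finrank ℝ E + w) = -q := by rw [← hq]; field_simp
  calc boundaryWeightedMeasure m δ w {x | s < boundaryKernel δ a b x y}
      ≤ boundaryWeightedMeasure m δ w (Metric.ball y (s ^ (-b⁻¹))) := by
        rw [boundaryWeightedMeasure_apply m hδm, boundaryWeightedMeasure_apply m hδm]
        exact lintegral_mono_set fun x hx ↦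
          ⟨hx.1, mem_ball_of_lt_boundaryKernel hδ hy ha hb hs hx.1 hx.2⟩
    _ ≤ ENNReal.ofReal
          (m.real (Metric.ball 0 1) * (s ^ (-b⁻¹)) ^ (Module.finrank ℝ E + w)) :=
        boundaryWeightedMeasure_ball_le m hδ hy hw (by positivity)
    _ = ENNReal.ofReal (m.real (Metric.ball 0 1) * s ^ (-q)) := by
        rw [← rpow_mul hs.le, exponent]

theorem poisson_operator_weak_type_general {a b w q : ℝ} (ha : 0 ≤ a) (hb : 0 < b) (hw : 0 ≤ w)
    (hq : 1 < q) (hqb : q * b = Module.finrank ℝ E + w) :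
    ∃ c : ℝ, 0 < c ∧ ∀ {δ : E → ℝ}, LipschitzWith 1 δ →
      ∀ {Y : Type*} [MeasurableSpace Y] {e : Y → E}, Measurable e → (∀ y, δ (e y) = 0) →
      ∀ (μ : Measure Y) [IsFiniteMeasure μ] {lam : ℝ}, 0 < lam →
        ∫⁻ x in {x | 0 < δ x ∧ ∫ y, δ x ^ a * ‖x - e y‖ ^ (-(b + a)) ∂μ > lam},
            ENNReal.ofReal (δ x ^ w) ∂m
          ≤ ENNReal.ofReal (c * ((μ Set.univ).toReal / lam) ^ q) := by
  have unit_ball_pos : 0 < m.real (Metric.ball (0 : E) 1) :=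
    ENNReal.toReal_pos (Metric.measure_ball_pos _ _ one_pos).ne' measure_ball_lt_top.ne
  have : 0 < q - 1 := sub_pos.2 hq
  refine ⟨m.real (Metric.ball (0 : E) 1) / (q - 1) * 2 ^ q, by positivity, ?_⟩
  intro δ hδ Y _ e he hδe μ _ lam hlam
  have hδm : Measurable δ := hδ.continuous.measurable
  have kernel_meas : Measurable (Function.uncurry fun x y ↦ boundaryKernel δ a b x (e y)) := by
    unfold boundaryKernel Function.uncurry
    fun_prop
  have bound := hasWeakLpBound_integral
    (fun y ↦ hasWeakLpBound_boundaryKernel m hδ (hδe y) ha hb hw hqb) kernel_meas hq μ lam hlam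
  rw [boundaryWeightedMeasure_apply m hδm] at bound
  refine bound.trans_eq ?_
  rw [← measureReal_def, mul_rpow two_pos.le measureReal_nonneg,
    div_rpow measureReal_nonneg hlam.le, rpow_neg hlam.le]
  ring_nf

end BoundaryKernel

section HalfSpace

/-- The identification `y ↦ (y, 0)` of `ℝ^{N-1}` with the boundary of the half-space
`{x ∈ ℝ^N | 0 < x_N}`, the `N`-th coordinate having index `N - 1`. -/
noncomputable def halfSpaceBoundary (N : ℕ) (y : EuclideanSpace ℝ (Fin (N - 1))) :
    EuclideanSpace ℝ (Fin N) :=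
  (EuclideanSpace.equiv (Fin N) ℝ).symm
    fun i ↦ if h : (i : ℕ) < N - 1 then y ⟨(i : ℕ), h⟩ else 0

lemma continuous_halfSpaceBoundary (N : ℕ) : Continuous (halfSpaceBoundary N) := by
  refine (EuclideanSpace.equiv (Fin N) ℝ).symm.continuous.comp (continuous_pi fun i ↦ ?_)
  split_ifs <;> fun_prop

lemma halfSpaceBoundary_apply_last {N : ℕ} (h : N - 1 < N) (y : EuclideanSpace ℝ (Fin (N - 1))) :
    halfSpaceBoundary N y ⟨N - 1, h⟩ = 0 := by
  simp [halfSpaceBoundary]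

lemma lipschitzWith_euclideanSpace_apply {ι : Type*} [Fintype ι] (i : ι) :
    LipschitzWith 1 fun x : EuclideanSpace ℝ ι ↦ x i :=
  LipschitzWith.mk_one fun x y ↦ PiLp.dist_apply_le x y i

lemma one_lt_criticalExponent {d α : ℝ} (h : 0 < 2 * d - 4 + α) :
    1 < (2 * d + α) / (2 * d - 4 + α) := by
  rw [one_lt_div h]
  linarith

lemma criticalExponent_mul {d α : ℝ} (h : 0 < 2 * d - 4 + α) :
    (2 * d + α) / (2 * d - 4 + α) * (d - 2 + α / 2) = d + α / 2 := by
  field_simp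
  ring

end HalfSpace

/-- distribution-function estimate for the model Poisson operator of the
Hardy operator acting on boundary measures: there is `c = c(N,κ) > 0` such that for every
finite positive Borel measure `μ` on `ℝ^{N-1}` and every `λ > 0`, the weighted measure
(with weight `x_N^{α₊/2}`) of `{x ∈ H : Kμ(x) > λ}` is at most `c (μ(ℝ^{N-1})/λ)^{q_c}`,
where `Kμ(x) = ∫ x_N^{α₊/2}|x - (y,0)|^{-(N-2+α₊)} dμ(y)` and
`q_c = (2N+α₊)/(2N-4+α₊)`. -/
theorem poisson_operator_weak_type (N : ℕ) (hN : 2 ≤ N) (κ : ℝ)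
    (hκ0 : 0 < κ) (hκ4 : κ ≤ 1/4) (α : ℝ) (hα : α = 1 + Real.sqrt (1 - 4*κ)) :
    let n : Fin N := ⟨N - 1, by omega⟩
    let qc : ℝ := (2*(N : ℝ) + α) / (2*(N : ℝ) - 4 + α)
    -- the isometric identification `ℝ^{N-1} ∋ y ↦ (y, 0) ∈ ∂H ⊂ ℝ^N`
    let emb : EuclideanSpace ℝ (Fin (N-1)) → EuclideanSpace ℝ (Fin N) :=
      fun y => (EuclideanSpace.equiv (Fin N) ℝ).symm
        (fun i => if h : (i : ℕ) < N - 1 then y ⟨(i : ℕ), h⟩ else 0)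
    ∃ c : ℝ, 0 < c ∧
      ∀ μ : Measure (EuclideanSpace ℝ (Fin (N-1))), IsFiniteMeasure μ →
        let Kμ : EuclideanSpace ℝ (Fin N) → ℝ :=
          fun x => ∫ y, (x n) ^ (α/2) * ‖x - emb y‖ ^ (-((N : ℝ) - 2 + α)) ∂μ
        ∀ lam : ℝ, 0 < lam →
          (∫⁻ x in {x : EuclideanSpace ℝ (Fin N) | 0 < x n ∧ Kμ x > lam},
            ENNReal.ofReal ((x n) ^ (α/2)))
          ≤ ENNReal.ofReal (c * ((μ Set.univ).toReal / lam) ^ qc) := by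
  intro n qc emb
  have hN' : (2 : ℝ) ≤ N := by exact_mod_cast hN
  have hα1 : 1 ≤ α := hα ▸ le_add_of_nonneg_right (sqrt_nonneg _)
  have hqc : 0 < 2 * (N : ℝ) - 4 + α := by linarith
  obtain ⟨c, hc, bound⟩ := poisson_operator_weak_type_general
    (volume : Measure (EuclideanSpace ℝ (Fin N))) (a := α / 2) (b := N - 2 + α / 2) (w := α / 2)
    (q := qc) (by linarith) (by linarith) (by linarith) (one_lt_criticalExponent hqc)
    (by simpa using criticalExponent_mul hqc)
  rw [add_assoc, add_halves] at bound
  exact ⟨c, hc, fun μ _ _ hlam ↦ bound (lipschitzWith_euclideanSpace_apply n)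
    (continuous_halfSpaceBoundary N).measurable (halfSpaceBoundary_apply_last _) μ hlam⟩
end
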